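/- arXiv:2112.05064 — 2 statements merged into one kernel-verified Lean document; each statement's English description precedes it below -/
import Mathlib

section
/- For integers k ≥ 0, n ≥ 0, and m ≥ 1, the hyper-sum of powers of integers satisfies S_k^{(m)}(n) = (1/m!) · Σ_{i=0}^{m} (−1)^i · ⟦m+n+1, i+n+1⟧_{n+1} · S_{k+i}(n), where S_j(n) = S_j^{(0)}(n) is the ordinary power sum. -/
/-- The `r`-Stirling numbers of the first kind `⟦n,k⟧_r`: `⟦r,r⟧_r = 1`,
`⟦n,k⟧_r = 0` if `n < r` or `k < r`, and
`⟦n,k⟧_r = (n-1)·⟦n-1,k⟧_r + ⟦n-1,k-1⟧_r` for `n > r`. -/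
def rStirling1 (r : ℕ) : ℕ → ℕ → ℕ
  | 0, k => if r = 0 ∧ k = 0 then 1 else 0
  | (n+1), k =>
    if n + 1 < r ∨ k < r then 0
    else if n + 1 = r then (if k = r then 1 else 0)
    else if k = 0 then 0
    else n * rStirling1 r n k + rStirling1 r n (k - 1)

/-- The (unsigned) Stirling numbers of the first kind. -/
def stirling1 : ℕ → ℕ → ℕ := rStirling1 0
/-- The power sum `S_k(n) = 1^k + 2^k + ⋯ + n^k`. -/
def powerSum (k n : ℕ) : ℕ := ∑ i ∈ Finset.Icc 1 n, i ^ k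

/-- The hyper-sums of powers of integers: `hyperSum m k n = S_k^{(m)}(n)`. -/
def hyperSum : ℕ → ℕ → ℕ → ℕ
  | 0, k, n => powerSum k n
  | (m+1), k, n => ∑ j ∈ Finset.Icc 1 n, hyperSum m k j

/-!
Exchanging the order of summation and applying the hockey-stick identity `m` times gives
`S_k^{(m)}(n) = ∑_{j=1}^{n} j^k * C(n - j + m, m)`. Here `m! * C(n - j + m, m)` is the rising
factorial of length `m` starting at `(-j) + (n + 1)`, and the `(n + 1)`-Stirling numbers of the
first kind are exactly the coefficients of the rising factorial of `x + (n + 1)` as a polynomial in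
`x`. Expanding at `x = -j` and summing over `j` turns the powers `j^(k + i)` into the power sums
`S_{k+i}(n)`.
-/

open Finset Polynomial

section Stirling

variable {r n k : ℕ}

theorem rStirling1_eq_zero_of_lt (h : k < r) : rStirling1 r n k = 0 := by
  cases n with
  | zero => rw [rStirling1, if_neg (by omega)]
  | succ n => rw [rStirling1, if_pos (Or.inr h)]

theorem rStirling1_self_left (r k : ℕ) : rStirling1 r r k = if k = r then 1 else 0 := by
  rcases lt_or_ge k r with hk | hk
  · rw [rStirling1_eq_zero_of_lt hk, if_neg hk.ne]
  · cases r with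
    | zero => simp only [rStirling1, true_and]
    | succ r => rw [rStirling1, if_neg (by omega), if_pos rfl]

theorem rStirling1_succ_succ (h : r ≤ n) :
    rStirling1 r (n + 1) (k + 1) = n * rStirling1 r n (k + 1) + rStirling1 r n k := by
  rcases lt_or_ge (k + 1) r with hk | hk
  · simp only [rStirling1_eq_zero_of_lt hk, rStirling1_eq_zero_of_lt (k.lt_succ_self.trans hk),
      mul_zero, add_zero]
  · rw [rStirling1, if_neg (by omega), if_neg (by omega), if_neg k.succ_ne_zero,
      Nat.add_sub_cancel]

theorem rStirling1_succ_self_right (h : r ≤ n) :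
    rStirling1 r (n + 1) r = n * rStirling1 r n r := by
  cases r with
  | zero => cases n <;> simp [rStirling1]
  | succ r =>
    rw [rStirling1_succ_succ h, rStirling1_eq_zero_of_lt r.lt_succ_self, add_zero]

end Stirling

theorem coeff_ascPochhammer_comp_X_add_C (r m i : ℕ) :
    ((ascPochhammer ℕ m).comp (X + C r)).coeff i = rStirling1 r (m + r) (i + r) := by
  induction m generalizing i with
  | zero => simp [rStirling1_self_left, coeff_one]
  | succ m ih =>
    have succ_factor : (ascPochhammer ℕ (m + 1)).comp (X + C r) =
        (ascPochhammer ℕ m).comp (X + C r) * X +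
          (ascPochhammer ℕ m).comp (X + C r) * C (m + r) := by
      rw [ascPochhammer_succ_right, mul_comp, add_comp, X_comp, natCast_comp,
        ← C_eq_natCast, Nat.cast_id, C_add]
      ring
    rw [succ_factor, coeff_add, coeff_mul_C, ih, mul_comm _ (m + r), Nat.add_right_comm m]
    cases i with
    | zero => rw [coeff_mul_X_zero, zero_add, zero_add, rStirling1_succ_self_right (by omega)]
    | succ i =>
      rw [coeff_mul_X, ih, Nat.add_right_comm i, rStirling1_succ_succ (by omega), add_comm]

theorem sum_rStirling1_mul_pow {R : Type*} [CommSemiring R] (r m : ℕ) (x : R) :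
    ∑ i ∈ range (m + 1), (rStirling1 r (m + r) (i + r) : R) * x ^ i =
      (ascPochhammer R m).eval (x + r) := by
  have natDegree_lt : ((ascPochhammer ℕ m).comp (X + C r)).natDegree < m + 1 := by
    rw [natDegree_comp, natDegree_X_add_C, ascPochhammer_natDegree, mul_one]
    exact m.lt_succ_self
  calc _ = ((ascPochhammer ℕ m).comp (X + C r)).eval₂ (Nat.castRingHom R) x := by
        rw [eval₂_eq_sum_range' _ natDegree_lt]
        simp only [coeff_ascPochhammer_comp_X_add_C, Nat.coe_castRingHom]
    _ = (ascPochhammer R m).eval (x + r) := by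
        rw [eval₂_comp, eval₂_add, eval₂_X, eval₂_C, Nat.coe_castRingHom, ← ascPochhammer_eval₂]

theorem sum_Icc_choose_sub_add {i n : ℕ} (h : i ≤ n) (m : ℕ) :
    ∑ j ∈ Icc i n, (j - i + m).choose m = (n - i + (m + 1)).choose (m + 1) := by
  rw [← Ico_add_one_right_eq_Icc, sum_Ico_eq_sum_range, Nat.sub_add_comm h, ← add_assoc,
    ← Nat.sum_range_add_choose]
  simp only [Nat.add_sub_cancel_left]

theorem hyperSum_eq_sum_pow_mul_choose (m k n : ℕ) :
    hyperSum m k n = ∑ j ∈ Icc 1 n, j ^ k * (n - j + m).choose m := by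
  induction m generalizing n with
  | zero => simp [hyperSum, powerSum]
  | succ m ih =>
    calc hyperSum (m + 1) k n
        = ∑ l ∈ Icc 1 n, ∑ j ∈ Icc 1 l, j ^ k * (l - j + m).choose m := by
          simp only [hyperSum, ih]
      _ = ∑ j ∈ Icc 1 n, ∑ l ∈ Icc j n, j ^ k * (l - j + m).choose m :=
          sum_comm' fun l j => by simp only [mem_Icc]; omega
      _ = ∑ j ∈ Icc 1 n, j ^ k * (n - j + (m + 1)).choose (m + 1) :=
          sum_congr rfl fun j hj => by
            rw [← mul_sum, sum_Icc_choose_sub_add (mem_Icc.mp hj).2]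

theorem sum_neg_one_pow_mul_rStirling1_mul_pow {R : Type*} [CommRing R] {j n : ℕ} (h : j ≤ n)
    (m : ℕ) :
    ∑ i ∈ range (m + 1), (-1) ^ i * (rStirling1 (n + 1) (m + n + 1) (i + n + 1) : R) * (j : R) ^ i =
      m.factorial * (n - j + m).choose m := by
  have start : -(j : R) + (n + 1 : ℕ) = (n - j + 1 : ℕ) := by
    push_cast [Nat.cast_sub h]
    ring
  calc _ = ∑ i ∈ range (m + 1),
          (rStirling1 (n + 1) (m + (n + 1)) (i + (n + 1)) : R) * (-(j : R)) ^ i :=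
        sum_congr rfl fun i _ => by rw [neg_pow (j : R), ← add_assoc, ← add_assoc]; ring
    _ = ((n - j + 1).ascFactorial m : ℕ) := by
        rw [sum_rStirling1_mul_pow, start, ← ascPochhammer_nat_eq_ascFactorial,
          ascPochhammer_eval_cast]
    _ = m.factorial * (n - j + m).choose m := by
        rw [Nat.ascFactorial_eq_factorial_mul_choose, Nat.cast_mul]

theorem stmt1 (k n m : ℕ) (hm : 1 ≤ m) :
    (hyperSum m k n : ℚ) =
      (1 / m.factorial) * ∑ i ∈ Finset.range (m + 1),
        (-1 : ℚ) ^ i * rStirling1 (n + 1) (m + n + 1) (i + n + 1) * powerSum (k + i) n := by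
  have power_sum_expand (i : ℕ) :
      (powerSum (k + i) n : ℚ) = ∑ j ∈ Icc 1 n, (j : ℚ) ^ k * (j : ℚ) ^ i := by
    simp only [powerSum, pow_add, Nat.cast_sum, Nat.cast_mul, Nat.cast_pow]
  have factorial_ne_zero : (m.factorial : ℚ) ≠ 0 := Nat.cast_ne_zero.mpr m.factorial_ne_zero
  rw [one_div, eq_inv_mul_iff_mul_eq₀ factorial_ne_zero]
  calc (m.factorial : ℚ) * hyperSum m k n
      = ∑ j ∈ Icc 1 n, (j : ℚ) ^ k * (m.factorial * (n - j + m).choose m) := by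
        rw [hyperSum_eq_sum_pow_mul_choose, Nat.cast_sum, mul_sum]
        exact sum_congr rfl fun j _ => by push_cast; ring
    _ = ∑ j ∈ Icc 1 n, (j : ℚ) ^ k * ∑ i ∈ range (m + 1),
          (-1) ^ i * (rStirling1 (n + 1) (m + n + 1) (i + n + 1) : ℚ) * (j : ℚ) ^ i :=
        sum_congr rfl fun j hj => by
          rw [sum_neg_one_pow_mul_rStirling1_mul_pow (mem_Icc.mp hj).2]
    _ = _ := by
        simp only [power_sum_expand, mul_sum]
        rw [sum_comm]
        exact sum_congr rfl fun i _ => sum_congr rfl fun j _ => mul_left_comm _ _ _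
end

section
/- For all integers m, i with 0 ≤ i ≤ m, Σ_{j=0}^{m−i} (−1)^j · C(i+j, i) · ⟦m+1, i+j+1⟧ = ⟦m, i⟧, where C(a,b) is a binomial coefficient. -/
/-! The rising factorial `(x)ₘ = x (x + 1) ⋯ (x + m - 1)` is the generating polynomial of `⟦m, ·⟧`.
Dividing `(x)ₘ₊₁ = x · (x + 1)ₘ` by `x` shows that `(x + 1)ₘ` has coefficients `⟦m + 1, k + 1⟧`.
Substituting `x - 1` for `x` in `(x + 1)ₘ` and comparing coefficients of `xⁱ` gives the identity. -/

open Polynomial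

section Taylor

variable {R : Type*} [Semiring R]

theorem coeff_taylor_eq_sum_range (r : R) (p : R[X]) (i : ℕ) :
    (taylor r p).coeff i =
      ∑ j ∈ Finset.range (p.natDegree - i + 1), (i + j).choose i * p.coeff (i + j) * r ^ j := by
  rw [taylor_coeff, eval_eq_sum_range' (Order.lt_add_one_iff.mpr (natDegree_hasseDeriv_le p i))]
  simp only [hasseDeriv_coeff, add_comm i]

end Taylor

section GeneratingPolynomial

variable (R : Type*) [Semiring R]

theorem coeff_ascPochhammer (n k : ℕ) :
    (ascPochhammer R n).coeff k = Nat.stirlingFirst n k := by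
  induction n generalizing k with
  | zero => cases k <;> simp [coeff_one]
  | succ n ih =>
    rw [ascPochhammer_succ_right, mul_add, coeff_add, coeff_mul_natCast, ih]
    cases k with
    | zero => cases n <;> simp
    | succ k =>
      rw [coeff_mul_X, ih, Nat.stirlingFirst_succ_succ, ← Nat.cast_mul, ← Nat.cast_add,
        mul_comm, add_comm]

theorem coeff_taylor_one_ascPochhammer (n k : ℕ) :
    (taylor 1 (ascPochhammer R n)).coeff k = Nat.stirlingFirst (n + 1) (k + 1) := by
  rw [← coeff_ascPochhammer, ascPochhammer_succ_left, coeff_X_mul, taylor_apply, C_1]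

end GeneratingPolynomial

theorem stirling1_eq_stirlingFirst (n k : ℕ) : stirling1 n k = Nat.stirlingFirst n k := by
  unfold stirling1
  induction n generalizing k with
  | zero => cases k <;> simp [rStirling1]
  | succ n ih => cases k <;> simp [rStirling1, ih, Nat.stirlingFirst_succ_succ]

theorem stmt3 (m i : ℕ) (h : i ≤ m) :
    ∑ j ∈ Finset.range (m - i + 1),
        (-1 : ℤ) ^ j * (i + j).choose i * stirling1 (m + 1) (i + j + 1) =
      stirling1 m i := by
  simp only [stirling1_eq_stirlingFirst]
  have natDegree_shifted : (taylor 1 (ascPochhammer ℤ m)).natDegree = m := by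
    rw [natDegree_taylor, ascPochhammer_natDegree]
  have shift_back : taylor (-1) (taylor 1 (ascPochhammer ℤ m)) = ascPochhammer ℤ m := by
    rw [taylor_taylor, neg_add_cancel, taylor_zero]
  calc
    _ = (taylor (-1) (taylor 1 (ascPochhammer ℤ m))).coeff i := by
      rw [coeff_taylor_eq_sum_range, natDegree_shifted]
      refine Finset.sum_congr rfl fun j _ ↦ ?_
      rw [coeff_taylor_one_ascPochhammer]
      ring
    _ = Nat.stirlingFirst m i := by rw [shift_back, coeff_ascPochhammer]
end
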